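/- Let C₁, C₂ be algebraic curves in ℂP² of degrees m₁, m₂ defined by coprime homogeneous polynomials. Then Σ_Q I_Q(C₁, C₂) = m₁·m₂, where the sum runs over the (finitely many) intersection points Q ∈ C₁ ∩ C₂ and I_Q denotes the local intersection multiplicity (Bézout's theorem). -/

import Mathlib

set_option synthInstance.maxHeartbeats 2000000
set_option maxHeartbeats 2000000

open MvPolynomial

noncomputable section

/-- The fraction field of `ℂ[X,Y,Z]`. -/
def K3 : Type := FractionRing (MvPolynomial (Fin 3) ℂ)

instance : Field K3 :=
  inferInstanceAs (Field (FractionRing (MvPolynomial (Fin 3) ℂ)))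

instance : Algebra ℂ K3 :=
  inferInstanceAs (Algebra ℂ (FractionRing (MvPolynomial (Fin 3) ℂ)))

instance : Algebra (MvPolynomial (Fin 3) ℂ) K3 :=
  inferInstanceAs
    (Algebra (MvPolynomial (Fin 3) ℂ) (FractionRing (MvPolynomial (Fin 3) ℂ)))

/-- The local ring of `ℂP²` at the point with homogeneous coordinate vector `v ≠ 0`:
degree-zero fractions `G/H` of homogeneous polynomials of the same degree with `H(v) ≠ 0`,
inside the fraction field of `ℂ[X,Y,Z]`. -/
def projLocalRing (v : Fin 3 → ℂ) : Subalgebra ℂ K3 :=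
  Algebra.adjoin ℂ
    {x | ∃ (G H : MvPolynomial (Fin 3) ℂ) (e : ℕ),
      G.IsHomogeneous e ∧ H.IsHomogeneous e ∧ eval v H ≠ 0 ∧
      x * algebraMap (MvPolynomial (Fin 3) ℂ) K3 H
        = algebraMap (MvPolynomial (Fin 3) ℂ) K3 G}

/-- The ideal of the local ring of `ℂP²` at `v` generated by local equations of the two
curves `F₁ = 0` and `F₂ = 0` (i.e. by the degree-zero fractions `F₁/H`, `F₂/H` with `H`
homogeneous and `H(v) ≠ 0`). -/
def interIdeal (F₁ F₂ : MvPolynomial (Fin 3) ℂ) (v : Fin 3 → ℂ) :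
    Ideal (projLocalRing v) :=
  Ideal.span
    {y | ∃ (H : MvPolynomial (Fin 3) ℂ) (e : ℕ), H.IsHomogeneous e ∧ eval v H ≠ 0 ∧
      ((y : K3) * algebraMap (MvPolynomial (Fin 3) ℂ) K3 H
          = algebraMap (MvPolynomial (Fin 3) ℂ) K3 F₁ ∨
       (y : K3) * algebraMap (MvPolynomial (Fin 3) ℂ) K3 H
          = algebraMap (MvPolynomial (Fin 3) ℂ) K3 F₂)}

/-- The local intersection multiplicity `I_Q(C₁, C₂)` of the curves `F₁ = 0`, `F₂ = 0` at the
projective point with homogeneous coordinates `v`: the `ℂ`-dimension of the quotient of the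
local ring of `ℂP²` at `v` by the ideal generated by local equations of the two curves. -/
def interMult (F₁ F₂ : MvPolynomial (Fin 3) ℂ) (v : Fin 3 → ℂ) : ℕ :=
  Module.finrank ℂ (projLocalRing v ⧸ interIdeal F₁ F₂ v)


/-! ## Part 1: dimension counts in the graded ring -/

theorem bz_finrank_hom (d : ℕ) :
    Module.finrank ℂ (homogeneousSubmodule (Fin 3) ℂ d) = (d + 2).choose 2 := by
  rw [homogeneousSubmodule_eq_finsupp_supported]
  have hset : {f : Fin 3 →₀ ℕ | f.degree = d}
      = ((Finset.univ : Finset (Fin 3)).finsuppAntidiag d : Set (Fin 3 →₀ ℕ)) := by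
    ext f
    simp [Finset.mem_finsuppAntidiag, Finsupp.degree_eq_sum]
  rw [hset]
  rw [LinearEquiv.finrank_eq (AddMonoidAlgebra.supportedEquivFinsupp _)]
  simp [Finset.card_finsuppAntidiag_nat_eq_choose]
  rw [add_comm 2 d]
  exact Nat.choose_symm_add

instance bz_finite_hom (d : ℕ) : Module.Finite ℂ (homogeneousSubmodule (Fin 3) ℂ d) :=
  Module.Finite.iff_fg.mpr (homogeneousSubmodule_fg (R := ℂ) (σ := Fin 3) d)

theorem bz_comp_mul {F : MvPolynomial (Fin 3) ℂ} {m : ℕ} (hF : F.IsHomogeneous m)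
    (a : MvPolynomial (Fin 3) ℂ) (n : ℕ) :
    homogeneousComponent (n + m) (a * F) = homogeneousComponent n a * F := by
  let _ := MvPolynomial.gradedAlgebra (σ := Fin 3) (R := ℂ)
  have h := DirectSum.coe_decompose_mul_add_of_right_mem (homogeneousSubmodule (Fin 3) ℂ)
    (i := n) (a := a) (b := F) ((mem_homogeneousSubmodule _ _).2 hF)
  have h1 := decomposition.decompose'_apply (a * F) (n + m)
  have h2 := decomposition.decompose'_apply a n
  rw [← h1, ← h2]
  exact h

theorem bz_decomp2 {F₁ F₂ G : MvPolynomial (Fin 3) ℂ} {m₁ m₂ d : ℕ}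
    (h₁ : F₁.IsHomogeneous m₁) (h₂ : F₂.IsHomogeneous m₂) (hG : G.IsHomogeneous d)
    (hd₁ : m₁ ≤ d) (hd₂ : m₂ ≤ d) (hmem : G ∈ Ideal.span {F₁, F₂}) :
    ∃ a b : MvPolynomial (Fin 3) ℂ, a.IsHomogeneous (d - m₁) ∧ b.IsHomogeneous (d - m₂) ∧
      a * F₁ + b * F₂ = G := by
  obtain ⟨a, b, hab⟩ := Ideal.mem_span_pair.1 hmem
  refine ⟨homogeneousComponent (d - m₁) a, homogeneousComponent (d - m₂) b,
    homogeneousComponent_isHomogeneous _ _, homogeneousComponent_isHomogeneous _ _, ?_⟩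
  rw [← bz_comp_mul h₁, ← bz_comp_mul h₂, Nat.sub_add_cancel hd₁, Nat.sub_add_cancel hd₂,
    ← map_add, hab, homogeneousComponent_eq_self hG]

/-- The degree `d` part of the ideal `(F₁, F₂)`. -/
def bzI (F₁ F₂ : MvPolynomial (Fin 3) ℂ) (d : ℕ) :
    Submodule ℂ (homogeneousSubmodule (Fin 3) ℂ d) :=
  Submodule.comap (homogeneousSubmodule (Fin 3) ℂ d).subtype
    ((Ideal.span {F₁, F₂}).restrictScalars ℂ)

theorem bz_mem_I (F₁ F₂ : MvPolynomial (Fin 3) ℂ) (d : ℕ)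
    (x : homogeneousSubmodule (Fin 3) ℂ d) :
    x ∈ bzI F₁ F₂ d ↔ (x : MvPolynomial (Fin 3) ℂ) ∈ Ideal.span {F₁, F₂} := Iff.rfl

/-- multiplication by a homogeneous polynomial -/
def bzMul {F : MvPolynomial (Fin 3) ℂ} {m : ℕ} (hF : F.IsHomogeneous m) (n k : ℕ)
    (h : n + m = k) :
    homogeneousSubmodule (Fin 3) ℂ n →ₗ[ℂ] homogeneousSubmodule (Fin 3) ℂ k :=
  ((LinearMap.mulRight ℂ F).comp (homogeneousSubmodule (Fin 3) ℂ n).subtype).codRestrict _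
    (fun x => by
      subst h
      exact (mem_homogeneousSubmodule _ _).2 (((mem_homogeneousSubmodule _ _).1 x.2).mul hF))

@[simp] theorem bzMul_coe {F : MvPolynomial (Fin 3) ℂ} {m : ℕ} (hF : F.IsHomogeneous m) (n k : ℕ)
    (h : n + m = k) (x : homogeneousSubmodule (Fin 3) ℂ n) :
    (bzMul hF n k h x : MvPolynomial (Fin 3) ℂ) = x * F := rfl

theorem bz_factor_hom {F a c : MvPolynomial (Fin 3) ℂ} {m k : ℕ} (hF : F.IsHomogeneous m)
    (hF0 : F ≠ 0) (ha : a.IsHomogeneous (k + m)) (h : a = c * F) : c.IsHomogeneous k := by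
  have h1 := bz_comp_mul hF c k
  rw [← h, homogeneousComponent_eq_self ha, h] at h1
  rw [mul_right_cancel₀ hF0 h1]
  exact homogeneousComponent_isHomogeneous _ _

theorem bz_finrank_quot {F₁ F₂ : MvPolynomial (Fin 3) ℂ} {m₁ m₂ : ℕ}
    (h₁ : F₁.IsHomogeneous m₁) (h₂ : F₂.IsHomogeneous m₂)
    (hF₁ : F₁ ≠ 0) (hF₂ : F₂ ≠ 0) (hcop : IsRelPrime F₁ F₂) (d : ℕ) (hd : m₁ + m₂ ≤ d) :
    Module.finrank ℂ (homogeneousSubmodule (Fin 3) ℂ d ⧸ bzI F₁ F₂ d) = m₁ * m₂ := by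
  obtain ⟨e, rfl⟩ := Nat.exists_eq_add_of_le' hd
  let φ : (homogeneousSubmodule (Fin 3) ℂ (e + m₂) × homogeneousSubmodule (Fin 3) ℂ (e + m₁))
      →ₗ[ℂ] homogeneousSubmodule (Fin 3) ℂ (e + (m₁ + m₂)) :=
    (bzMul h₁ (e + m₂) (e + (m₁ + m₂)) (by omega)).coprod
      (bzMul h₂ (e + m₁) (e + (m₁ + m₂)) (by omega))
  let ψ : homogeneousSubmodule (Fin 3) ℂ e →ₗ[ℂ]
      (homogeneousSubmodule (Fin 3) ℂ (e + m₂) × homogeneousSubmodule (Fin 3) ℂ (e + m₁)) :=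
    (bzMul h₂ e (e + m₂) rfl).prod (-(bzMul h₁ e (e + m₁) rfl))
  have hφ : LinearMap.range φ = bzI F₁ F₂ (e + (m₁ + m₂)) := by
    ext x
    rw [bz_mem_I]
    constructor
    · rintro ⟨⟨a, b⟩, rfl⟩
      exact Ideal.mem_span_pair.2 ⟨a, b, rfl⟩
    · intro hx
      obtain ⟨a, b, ha, hb, hab⟩ := bz_decomp2 h₁ h₂ ((mem_homogeneousSubmodule _ _).1 x.2)
        (by omega) (by omega) hx
      rw [show e + (m₁ + m₂) - m₁ = e + m₂ by omega] at ha
      rw [show e + (m₁ + m₂) - m₂ = e + m₁ by omega] at hb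
      exact ⟨(⟨a, ha⟩, ⟨b, hb⟩), Subtype.ext hab⟩
  have hψ : LinearMap.range ψ = LinearMap.ker φ := by
    ext ⟨⟨a, ha⟩, ⟨b, hb⟩⟩
    rw [LinearMap.mem_ker]
    constructor
    · rintro ⟨c, hc⟩
      rw [← hc]
      apply Subtype.ext
      change (c : MvPolynomial (Fin 3) ℂ) * F₂ * F₁ + -(c * F₁) * F₂ = 0
      ring
    · intro h
      have h' : a * F₁ + b * F₂ = 0 := congrArg Subtype.val h
      have hdvd : F₂ ∣ a := by
        refine hcop.symm.dvd_of_dvd_mul_right ⟨-b, ?_⟩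
        linear_combination h'
      obtain ⟨c, hc⟩ := hdvd
      have hc' : a = c * F₂ := by rw [hc, mul_comm]
      have hce := bz_factor_hom h₂ hF₂ ((mem_homogeneousSubmodule _ _).1 ha) hc'
      refine ⟨⟨c, hce⟩, ?_⟩
      have hb' : -(c * F₁) = b := by
        apply mul_right_cancel₀ hF₂
        subst hc'
        linear_combination -h'
      exact Prod.ext (Subtype.ext hc'.symm) (Subtype.ext hb')
  have hinj : LinearMap.ker ψ = ⊥ := by
    rw [LinearMap.ker_eq_bot']
    intro c hc
    have : (c : MvPolynomial (Fin 3) ℂ) * F₂ = 0 := congrArg Subtype.val (congrArg Prod.fst hc)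
    exact Subtype.ext ((mul_eq_zero.1 this).resolve_right hF₂)
  have r1 := LinearMap.finrank_range_add_finrank_ker φ
  have r2 := LinearMap.finrank_range_add_finrank_ker ψ
  have r3 := Submodule.finrank_quotient_add_finrank (bzI F₁ F₂ (e + (m₁ + m₂)))
  rw [hinj, finrank_bot, hψ] at r2
  rw [hφ, Module.finrank_prod] at r1
  simp only [bz_finrank_hom, add_zero] at r1 r2 r3
  have hch : ∀ n : ℕ, 2 * (n + 2).choose 2 = (n + 2) * (n + 1) := by
    intro n
    have := Nat.add_one_mul_choose_eq (n + 1) 1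
    rw [Nat.choose_one_right] at this
    linarith
  have c1 := hch e
  have c2 := hch (e + m₁)
  have c3 := hch (e + m₂)
  have c4 := hch (e + (m₁ + m₂))
  nlinarith


/-! ## Part 2: multiplication by a general linear form -/

theorem bz_large {F₁ F₂ L : MvPolynomial (Fin 3) ℂ}
    (hV : ∀ v : Fin 3 → ℂ, eval v F₁ = 0 → eval v F₂ = 0 → eval v L = 0 → v = 0) :
    ∃ D : ℕ, ∀ d, D ≤ d → ∀ G : MvPolynomial (Fin 3) ℂ, G.IsHomogeneous d →
      G ∈ Ideal.span {F₁, F₂, L} := by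
  have hrad : idealOfVars (Fin 3) ℂ ≤ (Ideal.span {F₁, F₂, L}).radical := by
    rw [← vanishingIdeal_zeroLocus_eq_radical (K := ℂ), idealOfVars, Ideal.span_le]
    rintro _ ⟨i, rfl⟩
    rw [SetLike.mem_coe, mem_vanishingIdeal_iff]
    intro v hv
    rw [mem_zeroLocus_iff] at hv
    have h0 : v = 0 := by
      apply hV v
      · simpa [aeval_eq_eval] using hv F₁ (Ideal.subset_span (by simp))
      · simpa [aeval_eq_eval] using hv F₂ (Ideal.subset_span (by simp))
      · simpa [aeval_eq_eval] using hv L (Ideal.subset_span (by simp))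
    simp [h0]
  obtain ⟨D, hD⟩ := Ideal.exists_pow_le_of_le_radical_of_fg hrad (idealOfVars_fg (Fin 3) ℂ)
  refine ⟨D, fun d hd G hG => hD ?_⟩
  rw [mem_pow_idealOfVars_iff]
  intro x hx
  have := hG.degree_eq_sum_deg_support hx
  rw [Finsupp.degree_apply]
  omega

theorem bz_surj {F₁ F₂ L : MvPolynomial (Fin 3) ℂ} {m₁ m₂ : ℕ}
    (h₁ : F₁.IsHomogeneous m₁) (h₂ : F₂.IsHomogeneous m₂) (hL : L.IsHomogeneous 1)
    (hV : ∀ v : Fin 3 → ℂ, eval v F₁ = 0 → eval v F₂ = 0 → eval v L = 0 → v = 0) :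
    ∃ D : ℕ, m₁ + m₂ ≤ D ∧ ∀ d, D ≤ d → ∀ G : MvPolynomial (Fin 3) ℂ, G.IsHomogeneous (d + 1) →
      ∃ c : MvPolynomial (Fin 3) ℂ, c.IsHomogeneous d ∧ G - c * L ∈ Ideal.span {F₁, F₂} := by
  obtain ⟨D, hD⟩ := bz_large hV
  refine ⟨D + m₁ + m₂, by omega, fun d hd G hG => ?_⟩
  have hmem := hD (d + 1) (by omega) G hG
  obtain ⟨a, z, hz, hG1⟩ := Ideal.mem_span_insert.1 hmem
  obtain ⟨b, c, hbc⟩ := Ideal.mem_span_pair.1 hz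
  refine ⟨homogeneousComponent d c, homogeneousComponent_isHomogeneous _ _, ?_⟩
  have hh : G = homogeneousComponent (d + 1 - m₁) a * F₁ + homogeneousComponent (d + 1 - m₂) b * F₂
      + homogeneousComponent d c * L := by
    rw [← bz_comp_mul h₁, ← bz_comp_mul h₂, ← bz_comp_mul hL,
      Nat.sub_add_cancel (by omega), Nat.sub_add_cancel (by omega),
      ← map_add, ← map_add, add_assoc, hbc, ← hG1, homogeneousComponent_eq_self hG]
  exact Ideal.mem_span_pair.2 ⟨homogeneousComponent (d + 1 - m₁) a,
    homogeneousComponent (d + 1 - m₂) b, eq_sub_of_add_eq hh.symm⟩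

theorem bz_main2 {F₁ F₂ L : MvPolynomial (Fin 3) ℂ} {m₁ m₂ : ℕ}
    (h₁ : F₁.IsHomogeneous m₁) (h₂ : F₂.IsHomogeneous m₂)
    (hF₁ : F₁ ≠ 0) (hF₂ : F₂ ≠ 0) (hcop : IsRelPrime F₁ F₂) (hL : L.IsHomogeneous 1)
    (hV : ∀ v : Fin 3 → ℂ, eval v F₁ = 0 → eval v F₂ = 0 → eval v L = 0 → v = 0) :
    ∃ D : ℕ, m₁ + m₂ ≤ D ∧
      (∀ k : ℕ, ∀ G : MvPolynomial (Fin 3) ℂ, G.IsHomogeneous (D + k) →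
      ∃ c : MvPolynomial (Fin 3) ℂ, c.IsHomogeneous D ∧ G - c * L ^ k ∈ Ideal.span {F₁, F₂}) ∧
      (∀ k : ℕ, ∀ G : MvPolynomial (Fin 3) ℂ, G.IsHomogeneous D →
        G * L ^ k ∈ Ideal.span {F₁, F₂} → G ∈ Ideal.span {F₁, F₂}) := by
  obtain ⟨D, hD, hs⟩ := bz_surj h₁ h₂ hL hV
  have hinj : ∀ d, D ≤ d → ∀ G : MvPolynomial (Fin 3) ℂ, G.IsHomogeneous d →
      G * L ∈ Ideal.span {F₁, F₂} → G ∈ Ideal.span {F₁, F₂} := by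
    intro d hd G hG hGL
    let μ : (homogeneousSubmodule (Fin 3) ℂ d ⧸ bzI F₁ F₂ d) →ₗ[ℂ]
        (homogeneousSubmodule (Fin 3) ℂ (d + 1) ⧸ bzI F₁ F₂ (d + 1)) :=
      Submodule.mapQ _ _ (bzMul hL d (d + 1) rfl) (by
        intro x hx
        exact Ideal.mul_mem_right L _ ((bz_mem_I _ _ _ _).1 hx))
    have hsurj : Function.Surjective μ := by
      intro y
      obtain ⟨⟨y, hy⟩, rfl⟩ := Submodule.Quotient.mk_surjective _ y
      obtain ⟨c, hc, hc'⟩ := hs d hd y hy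
      refine ⟨Submodule.Quotient.mk ⟨c, hc⟩, ?_⟩
      symm
      exact (Submodule.Quotient.eq _).2 hc'
    have hfr : Module.finrank ℂ (homogeneousSubmodule (Fin 3) ℂ d ⧸ bzI F₁ F₂ d)
        = Module.finrank ℂ (homogeneousSubmodule (Fin 3) ℂ (d + 1) ⧸ bzI F₁ F₂ (d + 1)) := by
      rw [bz_finrank_quot h₁ h₂ hF₁ hF₂ hcop d (by omega),
        bz_finrank_quot h₁ h₂ hF₁ hF₂ hcop (d + 1) (by omega)]
    have hi := (LinearMap.injective_iff_surjective_of_finrank_eq_finrank hfr).2 hsurj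
    have h0 : μ (Submodule.Quotient.mk ⟨G, hG⟩) = 0 :=
      (Submodule.Quotient.mk_eq_zero _).2 hGL
    have := hi (h0.trans (map_zero μ).symm)
    exact (bz_mem_I _ _ _ _).1 ((Submodule.Quotient.mk_eq_zero (bzI F₁ F₂ d)).1 this)
  refine ⟨D, hD, ?_, ?_⟩
  · intro k
    induction k with
    | zero => intro G hG; exact ⟨G, hG, by simp⟩
    | succ k ih =>
      intro G hG
      obtain ⟨c, hc, hc'⟩ := hs (D + k) (by omega) G hG
      obtain ⟨e, he, he'⟩ := ih c hc
      refine ⟨e, he, ?_⟩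
      have := Ideal.add_mem _ hc' (Ideal.mul_mem_right L _ he')
      convert this using 1
      ring
  · intro k
    induction k with
    | zero => intro G _ h; simpa using h
    | succ k ih =>
      intro G hG h
      apply ih G hG
      apply hinj (D + k) (by omega)
      · simpa using hG.mul (hL.pow k)
      · convert h using 1
        ring

theorem bz_linform (f : Module.Dual ℂ (Fin 3 → ℂ)) :
    ∃ L : MvPolynomial (Fin 3) ℂ, L.IsHomogeneous 1 ∧ ∀ v, eval v L = f v := by
  refine ⟨∑ i, C (f (Pi.single i 1)) * X i, ?_, ?_⟩
  · exact IsHomogeneous.sum _ _ _ (fun i _ => isHomogeneous_C_mul_X _ _)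
  · intro v
    rw [LinearMap.pi_apply_eq_sum_univ f v]
    simp only [map_sum, map_mul, eval_C, eval_X, smul_eq_mul]
    refine Finset.sum_congr rfl fun i _ => ?_
    rw [mul_comm]
    congr 2
    ext j
    simp [Pi.single_apply, eq_comm]

theorem bz_aeval_smul {A : Type*} [CommRing A] [Algebra ℂ A] {F : MvPolynomial (Fin 3) ℂ} {m : ℕ}
    (h : F.IsHomogeneous m) (c : A) (v : Fin 3 → A) :
    aeval (fun i => c * v i) F = c ^ m * aeval v F := by
  rw [aeval_def, aeval_def, eval₂_eq', eval₂_eq', Finset.mul_sum]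
  refine Finset.sum_congr rfl fun d hd => ?_
  have hm : ∑ i, d i = m := by
    have := h.degree_eq_sum_deg_support hd
    rw [this]
    exact (Finset.sum_subset (Finset.subset_univ _) (by simp)).symm
  simp only [mul_pow, Finset.prod_mul_distrib, Finset.prod_pow_eq_pow_sum, hm]
  ring

theorem bz_eval_smul {F : MvPolynomial (Fin 3) ℂ} {m : ℕ} (h : F.IsHomogeneous m)
    (c : ℂ) (v : Fin 3 → ℂ) : eval (c • v) F = c ^ m * eval v F :=
  bz_aeval_smul h c v

theorem bz_sep (s : Finset (Projectivization ℂ (Fin 3 → ℂ))) (d : ℕ) (hd : s.card ≤ d)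
    (Q : Projectivization ℂ (Fin 3 → ℂ)) (hQ : Q ∈ s) :
    ∃ G : MvPolynomial (Fin 3) ℂ, G.IsHomogeneous d ∧ eval Q.rep G = 1 ∧
      ∀ P ∈ s, P ≠ Q → eval P.rep G = 0 := by
  classical
  have hl : ∀ P : Projectivization ℂ (Fin 3 → ℂ), ∃ L : MvPolynomial (Fin 3) ℂ,
      L.IsHomogeneous 1 ∧ eval Q.rep L ≠ 0 ∧ (P ≠ Q → eval P.rep L = 0) := by
    intro P
    by_cases hPQ : P = Q
    · obtain ⟨f, hf⟩ := Module.exists_dual_forall_apply_ne_zero (K := ℂ) (ι := Unit)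
        (fun _ => Q.rep) (fun _ => Q.rep_nonzero)
      obtain ⟨L, hL, hL'⟩ := bz_linform f
      exact ⟨L, hL, by rw [hL']; exact hf (), fun h => absurd hPQ h⟩
    · have hnot : Q.rep ∉ Submodule.span ℂ {P.rep} := by
        intro hmem
        obtain ⟨c, hc⟩ := Submodule.mem_span_singleton.1 hmem
        apply hPQ
        rw [← P.mk_rep, ← Q.mk_rep]
        symm
        exact (Projectivization.mk_eq_mk_iff' ℂ _ _ Q.rep_nonzero P.rep_nonzero).2 ⟨c, hc⟩
      obtain ⟨f, hf, hf'⟩ := Submodule.exists_le_ker_of_notMem hnot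
      obtain ⟨L, hL, hL'⟩ := bz_linform f
      exact ⟨L, hL, by rw [hL']; exact hf, fun _ => by
        rw [hL']; exact hf' (Submodule.mem_span_singleton_self _)⟩
  choose L hL1 hL2 hL3 using hl
  have hG : ((∏ P ∈ s, L P) * L Q ^ (d - s.card)).IsHomogeneous d := by
    have := (IsHomogeneous.prod s L (fun _ => 1) (fun P _ => hL1 P)).mul
      ((hL1 Q).pow (d - s.card))
    convert this using 1
    simp
    omega
  have hne : eval Q.rep ((∏ P ∈ s, L P) * L Q ^ (d - s.card)) ≠ 0 := by
    rw [map_mul, map_prod, map_pow]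
    exact mul_ne_zero (Finset.prod_ne_zero_iff.2 fun P _ => hL2 P) (pow_ne_zero _ (hL2 Q))
  refine ⟨C (eval Q.rep ((∏ P ∈ s, L P) * L Q ^ (d - s.card)))⁻¹ *
    ((∏ P ∈ s, L P) * L Q ^ (d - s.card)), hG.C_mul _, ?_, ?_⟩
  · rw [map_mul, eval_C, inv_mul_cancel₀ hne]
  · intro P hP hPQ
    have h0 : eval P.rep (∏ P ∈ s, L P) = 0 := by
      rw [map_prod]
      exact Finset.prod_eq_zero hP (hL3 P hPQ)
    rw [map_mul (eval P.rep), map_mul (eval P.rep), h0, zero_mul, mul_zero]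

theorem bz_finite {F₁ F₂ : MvPolynomial (Fin 3) ℂ} {m₁ m₂ : ℕ}
    (h₁ : F₁.IsHomogeneous m₁) (h₂ : F₂.IsHomogeneous m₂)
    (hF₁ : F₁ ≠ 0) (hF₂ : F₂ ≠ 0) (hcop : IsRelPrime F₁ F₂) :
    {Q : Projectivization ℂ (Fin 3 → ℂ) |
        eval Q.rep F₁ = 0 ∧ eval Q.rep F₂ = 0}.Finite := by
  classical
  by_contra hinf
  obtain ⟨s, hs, hcard⟩ := Set.Infinite.exists_subset_card_eq hinf (m₁ * m₂ + 1)
  set d := s.card + m₁ + m₂ with hd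
  let ev : homogeneousSubmodule (Fin 3) ℂ d →ₗ[ℂ] (s → ℂ) :=
    LinearMap.pi fun Q => ((aeval Q.1.rep : MvPolynomial (Fin 3) ℂ →ₐ[ℂ] ℂ).toLinearMap).comp
      (homogeneousSubmodule (Fin 3) ℂ d).subtype
  have hev : ∀ x Q, ev x Q = eval Q.1.rep x.1 := fun x Q => by
    simp [ev, aeval_eq_eval]
  have hker : bzI F₁ F₂ d ≤ LinearMap.ker ev := by
    intro x hx
    rw [LinearMap.mem_ker]
    ext Q
    rw [hev]
    obtain ⟨a, b, hab⟩ := Ideal.mem_span_pair.1 ((bz_mem_I _ _ _ _).1 hx)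
    have hQ := hs Q.2
    rw [← hab, map_add, map_mul, map_mul, hQ.1, hQ.2]
    simp
  have hsurj : Function.Surjective ((bzI F₁ F₂ d).liftQ ev hker) := by
    intro y
    choose G hG1 hG2 hG3 using bz_sep s d (by omega)
    refine ⟨Submodule.Quotient.mk (∑ Q : s, y Q • ⟨G Q.1 Q.2, hG1 Q.1 Q.2⟩), ?_⟩
    change ev _ = y
    rw [map_sum]
    ext P
    rw [Finset.sum_apply, Finset.sum_eq_single P]
    · rw [map_smul, Pi.smul_apply, hev, hG2]
      simp
    · intro Q _ hQP
      rw [map_smul, Pi.smul_apply, hev, hG3 Q.1 Q.2 P.1 P.2 (fun h => hQP (Subtype.ext h.symm))]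
      simp
    · simp
  have := LinearMap.finrank_le_finrank_of_surjective hsurj
  rw [bz_finrank_quot h₁ h₂ hF₁ hF₂ hcop d (by omega)] at this
  simp [hcard] at this


/-! ## Part 3: dehomogenisation with respect to `L` -/

instance bzTower : IsScalarTower ℂ (MvPolynomial (Fin 3) ℂ) K3 :=
  inferInstanceAs (IsScalarTower ℂ (MvPolynomial (Fin 3) ℂ)
    (FractionRing (MvPolynomial (Fin 3) ℂ)))

instance bzFrac : IsFractionRing (MvPolynomial (Fin 3) ℂ) K3 :=
  inferInstanceAs (IsFractionRing (MvPolynomial (Fin 3) ℂ)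
    (FractionRing (MvPolynomial (Fin 3) ℂ)))

/-- the inclusion of polynomials in the fraction field -/
def bzι : MvPolynomial (Fin 3) ℂ →ₐ[ℂ] K3 := Algebra.algHom ℂ (MvPolynomial (Fin 3) ℂ) K3

theorem bzι_apply (g : MvPolynomial (Fin 3) ℂ) :
    bzι g = algebraMap (MvPolynomial (Fin 3) ℂ) K3 g := rfl

theorem bzι_inj : Function.Injective bzι := IsFractionRing.injective (MvPolynomial (Fin 3) ℂ) K3

theorem bzι_eq_zero {g : MvPolynomial (Fin 3) ℂ} : bzι g = 0 ↔ g = 0 :=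
  map_eq_zero_iff bzι bzι_inj

/-- The map `X_i ↦ X_i / L`. -/
def bzPsi (L : MvPolynomial (Fin 3) ℂ) : MvPolynomial (Fin 3) ℂ →ₐ[ℂ] K3 :=
  aeval (fun i => (bzι L)⁻¹ * bzι (X i))

theorem bzPsi_hom (L : MvPolynomial (Fin 3) ℂ) {G : MvPolynomial (Fin 3) ℂ} {e : ℕ}
    (hG : G.IsHomogeneous e) : bzPsi L G = ((bzι L)⁻¹) ^ e * bzι G := by
  rw [bzPsi, bz_aeval_smul hG]
  congr 1
  have : (aeval fun i => bzι (X i)) = bzι := by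
    apply MvPolynomial.algHom_ext
    intro i
    simp
  rw [this]

theorem bzPsi_L {L : MvPolynomial (Fin 3) ℂ} (hL : L.IsHomogeneous 1) (hL0 : L ≠ 0) :
    bzPsi L L = 1 := by
  rw [bzPsi_hom L hL, pow_one, inv_mul_cancel₀]
  rwa [Ne, bzι_eq_zero]

theorem bz_homogenize {L : MvPolynomial (Fin 3) ℂ} (hL : L.IsHomogeneous 1)
    (g : MvPolynomial (Fin 3) ℂ) :
    ∃ N₀ : ℕ, ∀ N, N₀ ≤ N → ∃ G : MvPolynomial (Fin 3) ℂ, G.IsHomogeneous N ∧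
      g - G ∈ Ideal.span {L - 1} := by
  refine ⟨g.totalDegree, fun N hN => ?_⟩
  refine ⟨∑ i ∈ Finset.range (g.totalDegree + 1), homogeneousComponent i g * L ^ (N - i), ?_, ?_⟩
  · refine IsHomogeneous.sum _ _ _ fun i hi => ?_
    have := (homogeneousComponent_isHomogeneous i g).mul (hL.pow (N - i))
    rw [Finset.mem_range] at hi
    convert this using 1
    omega
  · nth_rewrite 1 [← sum_homogeneousComponent g]
    rw [← Finset.sum_sub_distrib]
    refine Ideal.sum_mem _ fun i _ => ?_
    rw [Ideal.mem_span_singleton]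
    have h := sub_dvd_pow_sub_pow L 1 (N - i)
    rw [one_pow] at h
    have h2 : homogeneousComponent i g - homogeneousComponent i g * L ^ (N - i)
        = (L ^ (N - i) - 1) * (- homogeneousComponent i g) := by ring
    rw [h2]
    exact h.mul_right _

theorem bzPsi_span {L : MvPolynomial (Fin 3) ℂ} (hL : L.IsHomogeneous 1) (hL0 : L ≠ 0)
    {g : MvPolynomial (Fin 3) ℂ} (hg : g ∈ Ideal.span {L - 1}) : bzPsi L g = 0 := by
  obtain ⟨c, rfl⟩ := Ideal.mem_span_singleton.1 hg
  rw [map_mul, map_sub, bzPsi_L hL hL0, map_one, sub_self, zero_mul]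

theorem bzPsi_hom_zero {L : MvPolynomial (Fin 3) ℂ} (hL0 : L ≠ 0)
    {G : MvPolynomial (Fin 3) ℂ} {e : ℕ} (hG : G.IsHomogeneous e) (h : bzPsi L G = 0) :
    G = 0 := by
  rw [bzPsi_hom L hG] at h
  rcases mul_eq_zero.1 h with h | h
  · exact absurd h (pow_ne_zero _ (inv_ne_zero (by rwa [Ne, bzι_eq_zero])))
  · exact bzι_eq_zero.1 h

theorem bzPsi_ker {L : MvPolynomial (Fin 3) ℂ} (hL : L.IsHomogeneous 1) (hL0 : L ≠ 0)
    {g : MvPolynomial (Fin 3) ℂ} (hg : bzPsi L g = 0) : g ∈ Ideal.span {L - 1} := by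
  obtain ⟨N, hN⟩ := bz_homogenize hL g
  obtain ⟨G, hG, hgG⟩ := hN N le_rfl
  have h := bzPsi_span hL hL0 hgG
  rw [map_sub, hg, zero_sub, neg_eq_zero] at h
  have := bzPsi_hom_zero hL0 hG h
  simpa [this] using hgG

/-- The ideal `(F₁, F₂, L - 1)`. -/
def bzJ (F₁ F₂ L : MvPolynomial (Fin 3) ℂ) : Ideal (MvPolynomial (Fin 3) ℂ) :=
  Ideal.span {F₁, F₂} ⊔ Ideal.span {L - 1}

theorem bz_pow_sub (L c : MvPolynomial (Fin 3) ℂ) (k : ℕ) : c * L ^ k - c ∈ Ideal.span {L - 1} := by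
  rw [Ideal.mem_span_singleton]
  have h := sub_dvd_pow_sub_pow L 1 k
  rw [one_pow] at h
  have h2 : c * L ^ k - c = (L ^ k - 1) * c := by ring
  rw [h2]
  exact h.mul_right _

theorem bz_hom_cast {G : MvPolynomial (Fin 3) ℂ} {a b : ℕ} (h : G.IsHomogeneous a) (e : a = b) :
    G.IsHomogeneous b := e ▸ h

theorem bz_quot_finrank {F₁ F₂ L : MvPolynomial (Fin 3) ℂ} {m₁ m₂ : ℕ}
    (h₁ : F₁.IsHomogeneous m₁) (h₂ : F₂.IsHomogeneous m₂)
    (hF₁ : F₁ ≠ 0) (hF₂ : F₂ ≠ 0) (hcop : IsRelPrime F₁ F₂) (hL : L.IsHomogeneous 1)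
    (hL0 : L ≠ 0)
    (hV : ∀ v : Fin 3 → ℂ, eval v F₁ = 0 → eval v F₂ = 0 → eval v L = 0 → v = 0) :
    Module.Finite ℂ (MvPolynomial (Fin 3) ℂ ⧸ bzJ F₁ F₂ L) ∧
    Module.finrank ℂ (MvPolynomial (Fin 3) ℂ ⧸ bzJ F₁ F₂ L) = m₁ * m₂ := by
  obtain ⟨D, hD, hsurj, hinj⟩ := bz_main2 h₁ h₂ hF₁ hF₂ hcop hL hV
  let θ : homogeneousSubmodule (Fin 3) ℂ D →ₗ[ℂ] (MvPolynomial (Fin 3) ℂ ⧸ bzJ F₁ F₂ L) :=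
    (Ideal.Quotient.mkₐ ℂ (bzJ F₁ F₂ L)).toLinearMap.comp (homogeneousSubmodule (Fin 3) ℂ D).subtype
  have hθ : ∀ x, θ x = Ideal.Quotient.mk (bzJ F₁ F₂ L) x.1 := fun x => rfl
  have hs : Function.Surjective θ := by
    intro y
    obtain ⟨g, rfl⟩ := Ideal.Quotient.mk_surjective y
    obtain ⟨N, hN⟩ := bz_homogenize hL g
    obtain ⟨G, hG, hgG⟩ := hN (D + N) (by omega)
    obtain ⟨c, hc, hc'⟩ := hsurj N G hG
    refine ⟨⟨c, hc⟩, ?_⟩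
    rw [hθ]
    symm
    rw [Ideal.Quotient.eq]
    have e : g - c = (G - c * L ^ N) + ((g - G) + (c * L ^ N - c)) := by ring
    change g - c ∈ _
    rw [e]
    exact Submodule.add_mem_sup hc' (Ideal.add_mem _ hgG (bz_pow_sub L c N))
  have hk : LinearMap.ker θ = bzI F₁ F₂ D := by
    ext ⟨G, hG⟩
    rw [LinearMap.mem_ker, hθ, Ideal.Quotient.eq_zero_iff_mem, bz_mem_I]
    change G ∈ _ ↔ G ∈ _
    constructor
    · intro h
      obtain ⟨x, hx, y, hy, hxy⟩ := Submodule.mem_sup.1 h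
      obtain ⟨a, b, hab⟩ := Ideal.mem_span_pair.1 hx
      obtain ⟨N₁, hN₁⟩ := bz_homogenize hL a
      obtain ⟨N₂, hN₂⟩ := bz_homogenize hL b
      obtain ⟨A, hA, hA'⟩ := hN₁ (D + N₁ + N₂ + m₂) (by omega)
      obtain ⟨B, hB, hB'⟩ := hN₂ (D + N₁ + N₂ + m₁) (by omega)
      apply hinj (N₁ + N₂ + m₁ + m₂) G hG
      have hz : G * L ^ (N₁ + N₂ + m₁ + m₂) - (A * F₁ + B * F₂) = 0 := by
        apply bzPsi_hom_zero (e := D + N₁ + N₂ + m₁ + m₂) hL0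
        · refine IsHomogeneous.sub ?_ (IsHomogeneous.add ?_ ?_)
          · exact bz_hom_cast (IsHomogeneous.mul ((mem_homogeneousSubmodule _ _).1 hG)
              (hL.pow (N₁ + N₂ + m₁ + m₂))) (by omega)
          · exact bz_hom_cast (hA.mul h₁) (by omega)
          · exact bz_hom_cast (hB.mul h₂) (by omega)
        · apply bzPsi_span hL hL0
          have e : G * L ^ (N₁ + N₂ + m₁ + m₂) - (A * F₁ + B * F₂)
              = (G * L ^ (N₁ + N₂ + m₁ + m₂) - G) + (y + (F₁ * (a - A) + F₂ * (b - B))) := by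
            rw [← hxy, ← hab]
            ring
          rw [e]
          exact Ideal.add_mem _ (bz_pow_sub _ _ _) (Ideal.add_mem _ hy (Ideal.add_mem _
            (Ideal.mul_mem_left _ _ hA') (Ideal.mul_mem_left _ _ hB')))
      rw [sub_eq_zero.1 hz]
      exact Ideal.mem_span_pair.2 ⟨A, B, rfl⟩
    · intro h
      exact Submodule.mem_sup_left h
  refine ⟨Module.Finite.of_surjective θ hs, ?_⟩
  rw [← bz_finrank_quot h₁ h₂ hF₁ hF₂ hcop D hD, ← hk]
  exact (LinearMap.quotKerEquivOfSurjective θ hs).finrank_eq.symm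


/-! ## Part 4: the local rings -/

theorem bz_mem_local {v : Fin 3 → ℂ} (x : K3) (hx : x ∈ projLocalRing v) :
    ∃ (G H : MvPolynomial (Fin 3) ℂ) (e : ℕ), G.IsHomogeneous e ∧ H.IsHomogeneous e ∧
      eval v H ≠ 0 ∧ x * bzι H = bzι G := by
  rw [projLocalRing] at hx
  induction hx using Algebra.adjoin_induction with
  | mem x hx => exact hx
  | algebraMap r =>
    refine ⟨C r, 1, 0, isHomogeneous_C _ _, isHomogeneous_one _ _, by simp, ?_⟩
    rw [map_one, mul_one, ← algebraMap_eq]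
    exact (bzι.commutes r).symm
  | add x y _ _ hx hy =>
    obtain ⟨G, H, e, hG, hH, hv, h⟩ := hx
    obtain ⟨G', H', e', hG', hH', hv', h'⟩ := hy
    refine ⟨G * H' + H * G', H * H', e + e', (hG.mul hH').add (hH.mul hG'), hH.mul hH',
      by rw [map_mul]; exact mul_ne_zero hv hv', ?_⟩
    simp only [map_mul, map_add, ← h, ← h']
    ring
  | mul x y _ _ hx hy =>
    obtain ⟨G, H, e, hG, hH, hv, h⟩ := hx
    obtain ⟨G', H', e', hG', hH', hv', h'⟩ := hy
    refine ⟨G * G', H * H', e + e', hG.mul hG', hH.mul hH',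
      by rw [map_mul]; exact mul_ne_zero hv hv', ?_⟩
    simp only [map_mul, ← h, ← h']
    ring

theorem bz_local_mem {v : Fin 3 → ℂ} {G H : MvPolynomial (Fin 3) ℂ} {e : ℕ}
    (hG : G.IsHomogeneous e) (hH : H.IsHomogeneous e) (hv : eval v H ≠ 0) :
    bzι G * (bzι H)⁻¹ ∈ projLocalRing v := by
  refine Algebra.subset_adjoin ⟨G, H, e, hG, hH, hv, ?_⟩
  have hH0 : bzι H ≠ 0 := by
    rw [Ne, bzι_eq_zero]
    rintro rfl
    simp at hv
  change bzι G * (bzι H)⁻¹ * bzι H = bzι G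
  rw [mul_assoc, inv_mul_cancel₀ hH0, mul_one]

/-- `X_i ↦ X_i / L` with values in the local ring -/
def bzPsiLoc {L : MvPolynomial (Fin 3) ℂ} (hL : L.IsHomogeneous 1) {v : Fin 3 → ℂ}
    (hv : eval v L ≠ 0) : MvPolynomial (Fin 3) ℂ →ₐ[ℂ] projLocalRing v :=
  aeval (fun i => ⟨bzι (X i) * (bzι L)⁻¹, bz_local_mem (isHomogeneous_X _ i) hL hv⟩)

theorem bzPsiLoc_coe {L : MvPolynomial (Fin 3) ℂ} (hL : L.IsHomogeneous 1) {v : Fin 3 → ℂ}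
    (hv : eval v L ≠ 0) (g : MvPolynomial (Fin 3) ℂ) :
    (bzPsiLoc hL hv g : K3) = bzPsi L g := by
  have : (projLocalRing v).val.comp (bzPsiLoc hL hv) = bzPsi L := by
    apply MvPolynomial.algHom_ext
    intro i
    simp [bzPsiLoc, bzPsi, mul_comm]
  rw [← this]
  rfl

theorem bz_ne_of_eval {L : MvPolynomial (Fin 3) ℂ} {v : Fin 3 → ℂ} (hv : eval v L ≠ 0) : L ≠ 0 := by
  rintro rfl
  simp at hv

theorem bz_unit_hom {L : MvPolynomial (Fin 3) ℂ} (hL : L.IsHomogeneous 1) {v : Fin 3 → ℂ}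
    (hv : eval v L ≠ 0) {G : MvPolynomial (Fin 3) ℂ} {e : ℕ} (hG : G.IsHomogeneous e)
    (hGv : eval v G ≠ 0) : IsUnit (bzPsiLoc hL hv G) := by
  have hLe : (L ^ e).IsHomogeneous e := by simpa using hL.pow e
  refine IsUnit.of_mul_eq_one ⟨bzι (L ^ e) * (bzι G)⁻¹, bz_local_mem hLe hG hGv⟩ (Subtype.ext ?_)
  have hL0 : bzι L ≠ 0 := by rw [Ne, bzι_eq_zero]; exact bz_ne_of_eval hv
  have hG0 : bzι G ≠ 0 := by rw [Ne, bzι_eq_zero]; exact bz_ne_of_eval hGv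
  rw [Subalgebra.coe_mul, bzPsiLoc_coe, bzPsi_hom L hG]
  change (bzι L)⁻¹ ^ e * bzι G * (bzι (L ^ e) * (bzι G)⁻¹) = (1 : K3)
  have hLe0 : bzι L ^ e ≠ 0 := pow_ne_zero e hL0
  rw [map_pow, inv_pow, mul_mul_mul_comm, inv_mul_cancel₀ hLe0, mul_inv_cancel₀ hG0, one_mul]

/-- the affine point -/
def bzw (L : MvPolynomial (Fin 3) ℂ) (v : Fin 3 → ℂ) : Fin 3 → ℂ := (eval v L)⁻¹ • v

theorem bzw_hom {L : MvPolynomial (Fin 3) ℂ} {v : Fin 3 → ℂ}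
    (hv : eval v L ≠ 0) {G : MvPolynomial (Fin 3) ℂ} {e : ℕ} (hG : G.IsHomogeneous e) :
    eval (bzw L v) G = 0 ↔ eval v G = 0 := by
  rw [bzw, bz_eval_smul hG]
  simp [hv]

theorem bzw_L {L : MvPolynomial (Fin 3) ℂ} (hL : L.IsHomogeneous 1) {v : Fin 3 → ℂ}
    (hv : eval v L ≠ 0) : eval (bzw L v) L = 1 := by
  rw [bzw, bz_eval_smul hL, pow_one, inv_mul_cancel₀ hv]

theorem bz_unit {L : MvPolynomial (Fin 3) ℂ} (hL : L.IsHomogeneous 1) {v : Fin 3 → ℂ}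
    (hv : eval v L ≠ 0) {g : MvPolynomial (Fin 3) ℂ}
    (hg : eval (bzw L v) g ≠ 0) : IsUnit (bzPsiLoc hL hv g) := by
  obtain ⟨N, hN⟩ := bz_homogenize hL g
  obtain ⟨G, hG, hgG⟩ := hN N le_rfl
  have h1 : bzPsiLoc hL hv g = bzPsiLoc hL hv G := by
    apply Subtype.ext
    rw [bzPsiLoc_coe, bzPsiLoc_coe, ← sub_eq_zero, ← map_sub]
    exact bzPsi_span hL (bz_ne_of_eval hv) hgG
  have h2 : eval (bzw L v) g = eval (bzw L v) G := by
    obtain ⟨c, hc⟩ := Ideal.mem_span_singleton.1 hgG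
    rw [← sub_eq_zero, ← map_sub, hc, map_mul, map_sub, bzw_L hL hv]
    simp
  rw [h1]
  apply bz_unit_hom hL hv hG
  rw [h2] at hg
  exact fun h => hg ((bzw_hom hv hG).2 h)

theorem bz_loc_surj {L : MvPolynomial (Fin 3) ℂ} (hL : L.IsHomogeneous 1) {v : Fin 3 → ℂ}
    (hv : eval v L ≠ 0) (y : projLocalRing v) :
    ∃ G H : MvPolynomial (Fin 3) ℂ, eval (bzw L v) H ≠ 0 ∧
      y * bzPsiLoc hL hv H = bzPsiLoc hL hv G := by
  obtain ⟨G, H, e, hG, hH, hHv, h⟩ := bz_mem_local y.1 y.2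
  refine ⟨G, H, fun h => hHv ((bzw_hom hv hH).1 h), Subtype.ext ?_⟩
  rw [Subalgebra.coe_mul, bzPsiLoc_coe, bzPsiLoc_coe, bzPsi_hom L hG, bzPsi_hom L hH, ← h]
  ring

theorem bz_gen_aux {L : MvPolynomial (Fin 3) ℂ} (hL : L.IsHomogeneous 1) {v : Fin 3 → ℂ}
    (hv : eval v L ≠ 0) (F : MvPolynomial (Fin 3) ℂ) (y : projLocalRing v)
    (H : MvPolynomial (Fin 3) ℂ) (e : ℕ) (hH : H.IsHomogeneous e) (hHv : eval v H ≠ 0)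
    (h : (y : K3) * bzι H = bzι F) :
    ∃ u : projLocalRing v, y = u * bzPsiLoc hL hv F := by
  obtain ⟨G', H', e', hG', hH', hHv', h'⟩ := bz_mem_local y.1 y.2
  have hprod : G' * H = F * H' := by
    apply bzι_inj
    rw [map_mul, map_mul, ← h, ← h']
    ring
  have hψ := congrArg (bzPsiLoc hL hv) hprod
  rw [map_mul, map_mul] at hψ
  have hy : y * bzPsiLoc hL hv H' = bzPsiLoc hL hv G' := by
    apply Subtype.ext
    rw [Subalgebra.coe_mul, bzPsiLoc_coe, bzPsiLoc_coe, bzPsi_hom L hG', bzPsi_hom L hH', ← h']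
    ring
  have hu := bz_unit_hom hL hv hH hHv
  have hu' := bz_unit_hom hL hv hH' hHv'
  obtain ⟨w, hw⟩ := hu.exists_left_inv
  refine ⟨w, ?_⟩
  apply hu'.mul_right_cancel
  rw [hy, mul_assoc, ← hψ, mul_comm (bzPsiLoc hL hv G'), ← mul_assoc, hw, one_mul]

theorem bz_interIdeal {F₁ F₂ L : MvPolynomial (Fin 3) ℂ} {m₁ m₂ : ℕ}
    (h₁ : F₁.IsHomogeneous m₁) (h₂ : F₂.IsHomogeneous m₂) (hL : L.IsHomogeneous 1) {v : Fin 3 → ℂ}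
    (hv : eval v L ≠ 0) :
    interIdeal F₁ F₂ v = Ideal.span {bzPsiLoc hL hv F₁, bzPsiLoc hL hv F₂} := by
  have hL0 : bzι L ≠ 0 := by rw [Ne, bzι_eq_zero]; exact bz_ne_of_eval hv
  apply le_antisymm
  · rw [interIdeal, Ideal.span_le]
    rintro y ⟨H, e, hH, hHv, h | h⟩
    · obtain ⟨u, rfl⟩ := bz_gen_aux hL hv F₁ y H e hH hHv h
      exact Ideal.mul_mem_left _ _ (Ideal.subset_span (by simp))
    · obtain ⟨u, rfl⟩ := bz_gen_aux hL hv F₂ y H e hH hHv h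
      exact Ideal.mul_mem_left _ _ (Ideal.subset_span (by simp))
  · rw [Ideal.span_le]
    have key : ∀ (F : MvPolynomial (Fin 3) ℂ) (m : ℕ), F.IsHomogeneous m →
        (bzPsiLoc hL hv F : K3) * bzι (L ^ m) = bzι F := by
      intro F m hF
      rw [bzPsiLoc_coe, bzPsi_hom L hF, map_pow, inv_pow, mul_right_comm,
        inv_mul_cancel₀ (pow_ne_zero m hL0), one_mul]
    rintro y (rfl | rfl)
    · exact Ideal.subset_span ⟨L ^ m₁, 1 * m₁, hL.pow m₁, by rw [map_pow]; exact pow_ne_zero _ hv,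
        Or.inl (key F₁ m₁ h₁)⟩
    · exact Ideal.subset_span ⟨L ^ m₂, 1 * m₂, hL.pow m₂, by rw [map_pow]; exact pow_ne_zero _ hv,
        Or.inr (key F₂ m₂ h₂)⟩

theorem bz_loc_generic {R B : Type*} [CommRing R] [CommRing B] [Algebra ℂ R] [Algebra ℂ B]
    (f : R →ₐ[ℂ] B) (P : Ideal R) [P.IsPrime] (hu : ∀ x ∉ P, IsUnit (f x))
    (hs : ∀ y : B, ∃ g h : R, h ∉ P ∧ y * f h = f g)
    (hk : ∀ g : R, f g = 0 → ∃ h ∉ P, h * g = 0) :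
    Nonempty (Localization.AtPrime P ≃ₗ[ℂ] B) := by
  let _ := f.toRingHom.toAlgebra
  have hmap : ∀ x, algebraMap R B x = f x := fun x => rfl
  have _ : IsScalarTower ℂ R B := IsScalarTower.of_algebraMap_eq fun r => (f.commutes r).symm
  have _ : IsLocalization P.primeCompl B := by
    constructor
    · constructor
      · rintro ⟨x, hx⟩
        exact hu x hx
      · intro y
        obtain ⟨g, h, hh, e⟩ := hs y
        exact ⟨(g, ⟨h, hh⟩), e⟩
      · intro x y hxy
        rw [hmap, hmap, ← sub_eq_zero, ← map_sub] at hxy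
        obtain ⟨h, hh, e⟩ := hk _ hxy
        exact ⟨⟨h, hh⟩, by simpa [mul_sub, sub_eq_zero] using e⟩
  exact ⟨((IsLocalization.algEquiv P.primeCompl (Localization.AtPrime P) B).toLinearEquiv).restrictScalars ℂ⟩

theorem bz_loc_finrank {F₁ F₂ L : MvPolynomial (Fin 3) ℂ} {m₁ m₂ : ℕ}
    (h₁ : F₁.IsHomogeneous m₁) (h₂ : F₂.IsHomogeneous m₂) (hL : L.IsHomogeneous 1) {v : Fin 3 → ℂ}
    (hv : eval v L ≠ 0)
    (P : Ideal (MvPolynomial (Fin 3) ℂ ⧸ bzJ F₁ F₂ L)) [P.IsPrime]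
    (hP : ∀ g : MvPolynomial (Fin 3) ℂ,
      Ideal.Quotient.mk (bzJ F₁ F₂ L) g ∈ P ↔ eval (bzw L v) g = 0) :
    Module.finrank ℂ (Localization.AtPrime P) = interMult F₁ F₂ v := by
  let Φ : MvPolynomial (Fin 3) ℂ →ₐ[ℂ] (projLocalRing v ⧸ interIdeal F₁ F₂ v) :=
    (Ideal.Quotient.mkₐ ℂ (interIdeal F₁ F₂ v)).comp (bzPsiLoc hL hv)
  have hΦ : ∀ g, Φ g = Ideal.Quotient.mk (interIdeal F₁ F₂ v) (bzPsiLoc hL hv g) := fun _ => rfl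
  have hII := bz_interIdeal h₁ h₂ hL hv
  have hJ : ∀ g ∈ bzJ F₁ F₂ L, Φ g = 0 := by
    intro g hg
    rw [hΦ, Ideal.Quotient.eq_zero_iff_mem, hII]
    obtain ⟨x, hx, y, hy, rfl⟩ := Submodule.mem_sup.1 hg
    obtain ⟨a, b, rfl⟩ := Ideal.mem_span_pair.1 hx
    have hy0 : bzPsiLoc hL hv y = 0 := by
      apply Subtype.ext
      rw [bzPsiLoc_coe]
      exact bzPsi_span hL (bz_ne_of_eval hv) hy
    rw [map_add, hy0, add_zero, map_add, map_mul, map_mul]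
    exact Ideal.mem_span_pair.2 ⟨_, _, rfl⟩
  let f : (MvPolynomial (Fin 3) ℂ ⧸ bzJ F₁ F₂ L) →ₐ[ℂ] (projLocalRing v ⧸ interIdeal F₁ F₂ v) :=
    Ideal.Quotient.liftₐ (bzJ F₁ F₂ L) Φ hJ
  have hf : ∀ g, f (Ideal.Quotient.mk _ g) = Φ g := fun g => rfl
  suffices hne : Nonempty (Localization.AtPrime P ≃ₗ[ℂ] (projLocalRing v ⧸ interIdeal F₁ F₂ v)) by
    obtain ⟨e⟩ := hne
    exact e.finrank_eq
  refine bz_loc_generic f P ?_ ?_ ?_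
  · intro x hx
    obtain ⟨g, rfl⟩ := Ideal.Quotient.mk_surjective x
    rw [hP] at hx
    rw [hf, hΦ]
    exact (bz_unit hL hv hx).map _
  · intro y
    obtain ⟨y, rfl⟩ := Ideal.Quotient.mk_surjective y
    obtain ⟨G, H, hH, h⟩ := bz_loc_surj hL hv y
    refine ⟨Ideal.Quotient.mk _ G, Ideal.Quotient.mk _ H, by rwa [hP], ?_⟩
    rw [hf, hf, hΦ, hΦ, ← map_mul, h]
  · intro x hx
    obtain ⟨g, rfl⟩ := Ideal.Quotient.mk_surjective x
    rw [hf, hΦ, Ideal.Quotient.eq_zero_iff_mem, hII] at hx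
    obtain ⟨a, b, hab⟩ := Ideal.mem_span_pair.1 hx
    obtain ⟨G, H, hH, h⟩ := bz_loc_surj hL hv a
    obtain ⟨G', H', hH', h'⟩ := bz_loc_surj hL hv b
    refine ⟨Ideal.Quotient.mk _ (H * H'), ?_, ?_⟩
    · rw [hP, map_mul]
      exact mul_ne_zero hH hH'
    · rw [← map_mul, Ideal.Quotient.eq_zero_iff_mem]
      have hz : bzPsiLoc hL hv (H * H' * g - (G * H' * F₁ + G' * H * F₂)) = 0 := by
        simp only [map_sub, map_mul, map_add, ← hab, ← h, ← h']
        ring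
      have hz' : H * H' * g - (G * H' * F₁ + G' * H * F₂) ∈ Ideal.span {L - 1} := by
        apply bzPsi_ker hL (bz_ne_of_eval hv)
        rw [← bzPsiLoc_coe hL hv, hz]
        rfl
      rw [← sub_add_cancel (H * H' * g) (G * H' * F₁ + G' * H * F₂)]
      exact Ideal.add_mem _ (Submodule.mem_sup_right hz')
        (Submodule.mem_sup_left (Ideal.mem_span_pair.2 ⟨_, _, rfl⟩))


/-! ## Part 5: conclusion -/

theorem bz_rep_zero {F : MvPolynomial (Fin 3) ℂ} {m : ℕ} (h : F.IsHomogeneous m)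
    {x : Fin 3 → ℂ} (hx : x ≠ 0) :
    eval (Projectivization.mk ℂ x hx).rep F = 0 ↔ eval x F = 0 := by
  obtain ⟨a, ha⟩ := Projectivization.exists_smul_eq_mk_rep ℂ x hx
  rw [← ha]
  have : a • x = (a : ℂ) • x := rfl
  rw [this, bz_eval_smul h]
  simp

theorem bz_point {F₁ F₂ L : MvPolynomial (Fin 3) ℂ} {w : Fin 3 → ℂ} (h₁ : eval w F₁ = 0)
    (h₂ : eval w F₂ = 0) (hL : eval w L = 1) : ∀ g ∈ bzJ F₁ F₂ L, eval w g = 0 := by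
  intro g hg
  obtain ⟨x, hx, y, hy, rfl⟩ := Submodule.mem_sup.1 hg
  obtain ⟨a, b, rfl⟩ := Ideal.mem_span_pair.1 hx
  obtain ⟨c, rfl⟩ := Ideal.mem_span_singleton.1 hy
  simp [h₁, h₂, hL]

/-- the maximal ideal of a point -/
theorem bz_maxl {F₁ F₂ L : MvPolynomial (Fin 3) ℂ} {w : Fin 3 → ℂ} (h₁ : eval w F₁ = 0)
    (h₂ : eval w F₂ = 0) (hL : eval w L = 1) :
    ∃ P : MaximalSpectrum (MvPolynomial (Fin 3) ℂ ⧸ bzJ F₁ F₂ L),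
      ∀ g : MvPolynomial (Fin 3) ℂ,
        Ideal.Quotient.mk (bzJ F₁ F₂ L) g ∈ P.asIdeal ↔ eval w g = 0 := by
  let ε : (MvPolynomial (Fin 3) ℂ ⧸ bzJ F₁ F₂ L) →+* ℂ :=
    Ideal.Quotient.lift (bzJ F₁ F₂ L) (eval w) (bz_point h₁ h₂ hL)
  have hε : ∀ g, ε (Ideal.Quotient.mk _ g) = eval w g := fun _ => rfl
  have hs : Function.Surjective ε := fun c => ⟨Ideal.Quotient.mk _ (C c), by rw [hε, eval_C]⟩
  exact ⟨⟨RingHom.ker ε, RingHom.ker_isMaximal_of_surjective ε hs⟩, fun g => Iff.rfl⟩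

theorem bz_maxl_surj {F₁ F₂ L : MvPolynomial (Fin 3) ℂ}
    (P : MaximalSpectrum (MvPolynomial (Fin 3) ℂ ⧸ bzJ F₁ F₂ L)) :
    ∃ w : Fin 3 → ℂ, eval w F₁ = 0 ∧ eval w F₂ = 0 ∧ eval w L = 1 ∧
      ∀ g : MvPolynomial (Fin 3) ℂ,
        Ideal.Quotient.mk (bzJ F₁ F₂ L) g ∈ P.asIdeal ↔ eval w g = 0 := by
  have hm : P.asIdeal.IsMaximal := P.isMaximal
  have hm' := Ideal.comap_isMaximal_of_surjective (Ideal.Quotient.mk (bzJ F₁ F₂ L))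
    Ideal.Quotient.mk_surjective (K := P.asIdeal)
  obtain ⟨w, hw⟩ := (isMaximal_iff_eq_vanishingIdeal_singleton (K := ℂ)).1 hm'
  have key : ∀ g : MvPolynomial (Fin 3) ℂ,
        Ideal.Quotient.mk (bzJ F₁ F₂ L) g ∈ P.asIdeal ↔ eval w g = 0 := by
    intro g
    rw [← Ideal.mem_comap, hw, mem_vanishingIdeal_singleton_iff, aeval_eq_eval]
  have hJ : ∀ g ∈ bzJ F₁ F₂ L, eval w g = 0 := by
    intro g hg
    rw [← key, Ideal.Quotient.eq_zero_iff_mem.2 hg]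
    exact zero_mem _
  refine ⟨w, hJ _ (Submodule.mem_sup_left (Ideal.subset_span (by simp))),
    hJ _ (Submodule.mem_sup_left (Ideal.subset_span (by simp))), ?_, key⟩
  have := hJ _ (Submodule.mem_sup_right (Ideal.mem_span_singleton_self (L - 1)))
  rw [map_sub, map_one, sub_eq_zero] at this
  exact this

theorem bz_artin {R : Type*} [CommRing R] [Algebra ℂ R] [Module.Finite ℂ R]
    [Fintype (MaximalSpectrum R)] :
    Module.finrank ℂ R
      = ∑ P : MaximalSpectrum R, Module.finrank ℂ (Localization.AtPrime P.asIdeal) := by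
  have _ : IsArtinianRing R := IsArtinianRing.of_finite ℂ R
  have hfin : ∀ P : MaximalSpectrum R, Module.Finite ℂ (Localization.AtPrime P.asIdeal) := by
    intro P
    exact Module.Finite.of_surjective
      (IsScalarTower.toAlgHom ℂ R (Localization.AtPrime P.asIdeal)).toLinearMap
      (IsArtinianRing.localization_surjective P.asIdeal.primeCompl _)
  let e : R ≃ₗ[ℂ] (∀ P : MaximalSpectrum R, Localization.AtPrime P.asIdeal) :=
    (MaximalSpectrum.toPiLocalizationEquiv R).toLinearEquiv.restrictScalars ℂ
  rw [e.finrank_eq, Module.finrank_pi_fintype]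

theorem bz_linear_form {s : Set (Projectivization ℂ (Fin 3 → ℂ))} (hs : s.Finite) :
    ∃ L : MvPolynomial (Fin 3) ℂ, L.IsHomogeneous 1 ∧ L ≠ 0 ∧ ∀ Q ∈ s, eval Q.rep L ≠ 0 := by
  have _ := hs.to_subtype
  obtain ⟨f, hf⟩ := Module.exists_dual_forall_apply_ne_zero (K := ℂ) (ι := Option s)
    (fun Q => Q.elim (fun _ => (1 : ℂ)) (fun Q => Q.1.rep)) (by
      rintro (_ | Q)
      · intro h
        simpa using congrFun h 0
      · exact Q.1.rep_nonzero)
  obtain ⟨L, hL, hL'⟩ := bz_linform f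
  refine ⟨L, hL, ?_, ?_⟩
  · apply bz_ne_of_eval (v := fun _ => (1 : ℂ))
    rw [hL']
    exact hf none
  · intro Q hQ
    rw [hL']
    exact hf (some ⟨Q, hQ⟩)

/-- Bézout's theorem: two projective plane curves of degrees `m₁, m₂` defined by coprime
homogeneous polynomials meet in finitely many points, and the sum of the local intersection
multiplicities over the intersection points equals `m₁·m₂`. -/
theorem stmt_19 (m₁ m₂ : ℕ) (F₁ F₂ : MvPolynomial (Fin 3) ℂ)
    (h₁ : F₁.IsHomogeneous m₁) (h₂ : F₂.IsHomogeneous m₂)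
    (hF₁ : F₁ ≠ 0) (hF₂ : F₂ ≠ 0) (hcop : IsRelPrime F₁ F₂) :
    ∃ hfin : {Q : Projectivization ℂ (Fin 3 → ℂ) |
        eval Q.rep F₁ = 0 ∧ eval Q.rep F₂ = 0}.Finite,
      ∑ Q ∈ hfin.toFinset, interMult F₁ F₂ Q.rep = m₁ * m₂ := by
  have hfin := bz_finite h₁ h₂ hF₁ hF₂ hcop
  refine ⟨hfin, ?_⟩
  obtain ⟨L, hL, hL0, hLQ⟩ := bz_linear_form hfin
  have hV : ∀ v : Fin 3 → ℂ, eval v F₁ = 0 → eval v F₂ = 0 → eval v L = 0 → v = 0 := by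
    intro v e₁ e₂ e₃
    by_contra hv
    exact hLQ (Projectivization.mk ℂ v hv) ⟨(bz_rep_zero h₁ hv).2 e₁, (bz_rep_zero h₂ hv).2 e₂⟩
      ((bz_rep_zero hL hv).2 e₃)
  obtain ⟨hRfin, hrank⟩ := bz_quot_finrank h₁ h₂ hF₁ hF₂ hcop hL hL0 hV
  have _ : IsArtinianRing (MvPolynomial (Fin 3) ℂ ⧸ bzJ F₁ F₂ L) := IsArtinianRing.of_finite ℂ _
  let _ : Fintype (MaximalSpectrum (MvPolynomial (Fin 3) ℂ ⧸ bzJ F₁ F₂ L)) := Fintype.ofFinite _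
  rw [← hrank, bz_artin]
  have hmx : ∀ Q ∈ hfin.toFinset, ∃ P : MaximalSpectrum (MvPolynomial (Fin 3) ℂ ⧸ bzJ F₁ F₂ L),
      ∀ g : MvPolynomial (Fin 3) ℂ,
        Ideal.Quotient.mk (bzJ F₁ F₂ L) g ∈ P.asIdeal ↔ eval (bzw L Q.rep) g = 0 := by
    intro Q hQ
    rw [Set.Finite.mem_toFinset] at hQ
    exact bz_maxl ((bzw_hom (hLQ Q hQ) h₁).2 hQ.1) ((bzw_hom (hLQ Q hQ) h₂).2 hQ.2)
      (bzw_L hL (hLQ Q hQ))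
  choose P hP using hmx
  refine Finset.sum_bij P (fun _ _ => Finset.mem_univ _) ?_ ?_ ?_
  · intro Q hQ Q' hQ' hPP
    have hw : bzw L Q'.rep = bzw L Q.rep := by
      ext i
      have e1 := hP Q hQ (X i - C (bzw L Q.rep i))
      have e2 := hP Q' hQ' (X i - C (bzw L Q.rep i))
      rw [hPP, e2] at e1
      simpa [sub_eq_zero] using e1
    rw [Set.Finite.mem_toFinset] at hQ hQ'
    rw [← Q.mk_rep, ← Q'.mk_rep, Projectivization.mk_eq_mk_iff']
    refine ⟨eval Q.rep L * (eval Q'.rep L)⁻¹, ?_⟩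
    rw [mul_smul]
    change eval Q.rep L • bzw L Q'.rep = _
    rw [hw, bzw, smul_smul, mul_inv_cancel₀ (hLQ Q hQ), one_smul]
  · intro M _
    obtain ⟨w, e₁, e₂, e₃, hw⟩ := bz_maxl_surj M
    have hw0 : w ≠ 0 := by
      rintro rfl
      have := bz_eval_smul hL (0 : ℂ) (0 : Fin 3 → ℂ)
      rw [smul_zero, e₃] at this
      simp at this
    have hQ : Projectivization.mk ℂ w hw0 ∈ hfin.toFinset := by
      rw [Set.Finite.mem_toFinset]
      exact ⟨(bz_rep_zero h₁ hw0).2 e₁, (bz_rep_zero h₂ hw0).2 e₂⟩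
    refine ⟨_, hQ, ?_⟩
    have hww : bzw L (Projectivization.mk ℂ w hw0).rep = w := by
      obtain ⟨a, ha⟩ := Projectivization.exists_smul_eq_mk_rep ℂ w hw0
      have ha' : (a : ℂ) • w = (Projectivization.mk ℂ w hw0).rep := ha
      rw [bzw, ← ha', bz_eval_smul hL, e₃, pow_one, mul_one, smul_smul,
        inv_mul_cancel₀ a.ne_zero, one_smul]
    apply MaximalSpectrum.ext
    ext x
    obtain ⟨g, rfl⟩ := Ideal.Quotient.mk_surjective x
    rw [hP _ hQ, hw, hww]
  · intro Q hQ
    have hQ' := hfin.mem_toFinset.1 hQ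
    exact (bz_loc_finrank h₁ h₂ hL (hLQ Q hQ') (P Q hQ).asIdeal (hP Q hQ)).symm

end
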